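/- Let Z1, Z2, Y, M be random variables on a common probability space taking values in finite nonempty types. Suppose I(Z1;Z2) = 0, I(Z1;Z2|Y) = 0, I(Z1;M) = 0, I(Z1;M|Y) = 0, and I(Z2;Y|M) = 0. Then the mutual information of the joint feature with the label decomposes as I((Z1,Z2);Y) = I(Z1;Y|M) + (I(Z2;Y) - I(Z2;Y|M)); that is, it equals the modality-erased term I(Z1;Y|M) plus the modality-related term given by the interaction information I(Z2;Y;M). -/

import Mathlib

/-!
The chain rule `∑ z, P(Z = z) · H(X | Z = z) = H(X, Z) - H(Z)` rewrites every conditional mutual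
information as `I(X;Y|Z) = H(X,Z) + H(Y,Z) - H(X,Y,Z) - H(Z)`. Once the joint entropies are
identified up to reordering of their components, the theorem is linear in them: `I(Z₁;Z₂) = 0` and
`I(Z₁;Z₂|Y) = 0` give `I((Z₁,Z₂);Y) = I(Z₁;Y) + I(Z₂;Y)`, while `I(Z₁;M) = 0` and
`I(Z₁;M|Y) = 0` give `I(Z₁;Y) = I(Z₁;Y|M)`.
-/

open MeasureTheory ProbabilityTheory Real BigOperators

/-- Probability that the random variable `X` takes the value `x` under the measure `μ`. -/
noncomputable def pr {Ω : Type*} [MeasurableSpace Ω] {S : Type*}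
    (μ : Measure Ω) (X : Ω → S) (x : S) : ℝ :=
  (μ (X ⁻¹' {x})).toReal

/-- Shannon entropy of a random variable with values in a finite type,
with the convention `0 log 0 = 0` (via `Real.negMulLog`). -/
noncomputable def entropy {Ω : Type*} [MeasurableSpace Ω] {S : Type*} [Fintype S]
    (μ : Measure Ω) (X : Ω → S) : ℝ :=
  ∑ x, Real.negMulLog (pr μ X x)

/-- Mutual information `I(X;Y) = H(X) + H(Y) - H(X,Y)`. -/
noncomputable def mutualInfo {Ω : Type*} [MeasurableSpace Ω] {S T : Type*}
    [Fintype S] [Fintype T] (μ : Measure Ω) (X : Ω → S) (Y : Ω → T) : ℝ :=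
  entropy μ X + entropy μ Y - entropy μ (fun ω => (X ω, Y ω))

/-- Conditional mutual information
`I(X;Y|Z) = ∑ z, P(Z = z) · I(X;Y | Z = z)`, where the inner mutual
information is computed under the conditional measure given `{Z = z}`. -/
noncomputable def condMutualInfo {Ω : Type*} [MeasurableSpace Ω] {S T U : Type*}
    [Fintype S] [Fintype T] [Fintype U]
    (μ : Measure Ω) (X : Ω → S) (Y : Ω → T) (Z : Ω → U) : ℝ :=
  ∑ z, pr μ Z z * mutualInfo (μ[|Z ⁻¹' {z}]) X Y

/-- Entropy is invariant under relabelling of the values. -/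
theorem entropy_equiv {Ω S T : Type*} [MeasurableSpace Ω] [Fintype S] [Fintype T]
    (μ : Measure Ω) (X : Ω → S) (e : S ≃ T) :
    entropy μ (fun ω => e (X ω)) = entropy μ X := by
  unfold entropy
  rw [← Equiv.sum_comp e]
  refine Finset.sum_congr rfl fun x _ => ?_
  have h : (fun ω => e (X ω)) ⁻¹' {e x} = X ⁻¹' {x} := by
    ext ω
    simp
  simp only [pr, h]

theorem sum_pr_eq_one {Ω S : Type*} [MeasurableSpace Ω] [Fintype S]
    [MeasurableSpace S] [MeasurableSingletonClass S]
    (μ : Measure Ω) [IsProbabilityMeasure μ] (X : Ω → S) (hX : Measurable X) :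
    ∑ x, pr μ X x = 1 := by
  unfold pr
  rw [← ENNReal.toReal_sum (fun x _ => measure_ne_top μ _),
    sum_measure_preimage_singleton _ fun x _ => hX (measurableSet_singleton x)]
  simp

theorem pr_pair {Ω S U : Type*} [MeasurableSpace Ω]
    [MeasurableSpace U] [MeasurableSingletonClass U]
    (μ : Measure Ω) [IsProbabilityMeasure μ] (X : Ω → S) (Z : Ω → U)
    (hZ : Measurable Z) (x : S) (z : U) :
    pr μ (fun ω => (X ω, Z ω)) (x, z) = pr μ Z z * pr (μ[|Z ⁻¹' {z}]) X x := by
  have h : (fun ω => (X ω, Z ω)) ⁻¹' {(x, z)} = Z ⁻¹' {z} ∩ X ⁻¹' {x} := by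
    ext ω
    simp [and_comm]
  unfold pr
  rw [h, ← ENNReal.toReal_mul, mul_comm,
    cond_mul_eq_inter (hZ (measurableSet_singleton z))]

/-- The chain rule `H(X|Z) = H(X,Z) - H(Z)`. -/
theorem sum_pr_mul_entropy_cond {Ω S U : Type*} [MeasurableSpace Ω] [Fintype S] [Fintype U]
    [MeasurableSpace S] [MeasurableSingletonClass S]
    [MeasurableSpace U] [MeasurableSingletonClass U]
    (μ : Measure Ω) [IsProbabilityMeasure μ] (X : Ω → S) (Z : Ω → U)
    (hX : Measurable X) (hZ : Measurable Z) :
    ∑ z, pr μ Z z * entropy (μ[|Z ⁻¹' {z}]) X =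
      entropy μ (fun ω => (X ω, Z ω)) - entropy μ Z := by
  rw [eq_sub_iff_add_eq]
  unfold entropy
  rw [Fintype.sum_prod_type_right, ← Finset.sum_add_distrib]
  refine Finset.sum_congr rfl fun z _ => ?_
  simp only [pr_pair μ X Z hZ, Real.negMulLog_mul]
  rw [Finset.sum_add_distrib, ← Finset.sum_mul, ← Finset.mul_sum]
  by_cases h0 : μ (Z ⁻¹' {z}) = 0
  -- If `P(Z = z) = 0`, all terms carry the factor `pr μ Z z` or `negMulLog (pr μ Z z)`, both zero.
  · have hz : pr μ Z z = 0 := by simp [pr, h0]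
    simp [hz]
  · have := cond_isProbabilityMeasure h0
    rw [sum_pr_eq_one _ X hX]
    ring

/-- `I(X;Y|Z) = H(X,Z) + H(Y,Z) - H(X,Y,Z) - H(Z)`. -/
theorem condMutualInfo_eq {Ω S T U : Type*} [MeasurableSpace Ω]
    [Fintype S] [Fintype T] [Fintype U]
    [MeasurableSpace S] [MeasurableSingletonClass S]
    [MeasurableSpace T] [MeasurableSingletonClass T]
    [MeasurableSpace U] [MeasurableSingletonClass U]
    (μ : Measure Ω) [IsProbabilityMeasure μ] (X : Ω → S) (Y : Ω → T) (Z : Ω → U)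
    (hX : Measurable X) (hY : Measurable Y) (hZ : Measurable Z) :
    condMutualInfo μ X Y Z =
      entropy μ (fun ω => (X ω, Z ω)) + entropy μ (fun ω => (Y ω, Z ω)) -
        entropy μ (fun ω => ((X ω, Y ω), Z ω)) - entropy μ Z := by
  simp only [condMutualInfo, mutualInfo, mul_sub, mul_add, Finset.sum_sub_distrib,
    Finset.sum_add_distrib]
  rw [sum_pr_mul_entropy_cond μ X Z hX hZ, sum_pr_mul_entropy_cond μ Y Z hY hZ,
    sum_pr_mul_entropy_cond μ (fun ω => (X ω, Y ω)) Z (hX.prodMk hY) hZ]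
  ring

/-- Under the constraints `I(Z₁;Z₂) = 0`, `I(Z₁;Z₂|Y) = 0`,
`I(Z₁;M) = 0`, `I(Z₁;M|Y) = 0`, and `I(Z₂;Y|M) = 0`, the mutual information of
the joint feature with the label decomposes into a modality-erased term and a
modality-related (interaction information) term:
`I((Z₁,Z₂);Y) = I(Z₁;Y|M) + (I(Z₂;Y) - I(Z₂;Y|M))`. -/
theorem mutualInfo_pair_decomposition
    {Ω S T V W : Type*} [MeasurableSpace Ω]
    [Fintype S] [Nonempty S] [MeasurableSpace S] [MeasurableSingletonClass S]
    [Fintype T] [Nonempty T] [MeasurableSpace T] [MeasurableSingletonClass T]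
    [Fintype V] [Nonempty V] [MeasurableSpace V] [MeasurableSingletonClass V]
    [Fintype W] [Nonempty W] [MeasurableSpace W] [MeasurableSingletonClass W]
    (μ : Measure Ω) [IsProbabilityMeasure μ]
    (Z₁ : Ω → S) (Z₂ : Ω → T) (Y : Ω → V) (M : Ω → W)
    (hZ₁ : Measurable Z₁) (hZ₂ : Measurable Z₂) (hY : Measurable Y) (hM : Measurable M)
    (h₁ : mutualInfo μ Z₁ Z₂ = 0)
    (h₂ : condMutualInfo μ Z₁ Z₂ Y = 0)
    (h₃ : mutualInfo μ Z₁ M = 0)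
    (h₄ : condMutualInfo μ Z₁ M Y = 0)
    (h₅ : condMutualInfo μ Z₂ Y M = 0) :
    mutualInfo μ (fun ω => (Z₁ ω, Z₂ ω)) Y =
      condMutualInfo μ Z₁ Y M +
        (mutualInfo μ Z₂ Y - condMutualInfo μ Z₂ Y M) := by
  rw [condMutualInfo_eq μ Z₁ Z₂ Y hZ₁ hZ₂ hY] at h₂
  rw [condMutualInfo_eq μ Z₁ M Y hZ₁ hM hY] at h₄
  rw [h₅, condMutualInfo_eq μ Z₁ Y M hZ₁ hY hM]
  have hYM : entropy μ (fun ω => (M ω, Y ω)) = entropy μ (fun ω => (Y ω, M ω)) :=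
    entropy_equiv μ (fun ω => (Y ω, M ω)) (Equiv.prodComm V W)
  have hZYM : entropy μ (fun ω => ((Z₁ ω, M ω), Y ω)) =
      entropy μ (fun ω => ((Z₁ ω, Y ω), M ω)) :=
    entropy_equiv μ (fun ω => ((Z₁ ω, Y ω), M ω))
      { toFun := fun p => ((p.1.1, p.2), p.1.2)
        invFun := fun p => ((p.1.1, p.2), p.1.2)
        left_inv := fun _ => rfl
        right_inv := fun _ => rfl }
  unfold mutualInfo at *
  linarith
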